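/- arXiv:2203.03472 — 5 statements merged into one kernel-verified Lean document; each statement's English description precedes it below -/
import Mathlib

section
/- Let m ≥ 2 be an integer, R : ℝ^m → ℝ a polynomial function and r > 0. Then ∫_{B(0,r)} R(x) dV(x) = Σ_{k=0}^∞ (π^{m/2} / (2^{2k} · k! · Γ(m/2 + 1 + k))) · (Δ^k R)(0) · r^{2k+m}, where B(0,r) = {x ∈ ℝ^m : ‖x‖ < r} and dV is the Lebesgue measure on ℝ^m. -/
open MeasureTheory Real MvPolynomial
open scoped RealInnerProductSpace

/-- The Laplacian acting on (multivariate) polynomials. -/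
noncomputable def polyLap {m : ℕ} (P : MvPolynomial (Fin m) ℝ) : MvPolynomial (Fin m) ℝ :=
  ∑ j, pderiv j (pderiv j P)

/-- Evaluation of a polynomial at a point of Euclidean space. -/
noncomputable def polyEval {m : ℕ} (x : EuclideanSpace ℝ (Fin m)) (P : MvPolynomial (Fin m) ℝ) : ℝ :=
  eval (fun i => x i) P

/-- Gaussian moments. -/
noncomputable def gMom (n : ℕ) : ℝ := ∫ x : ℝ, x ^ n * Real.exp (-x ^ 2)

lemma gMom_integrable (n : ℕ) : Integrable (fun x : ℝ => x ^ n * Real.exp (-x ^ 2)) := by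
  have := integrable_rpow_mul_exp_neg_mul_sq (b := 1) one_pos (s := n)
    (by have : (0 : ℝ) ≤ n := n.cast_nonneg
        linarith)
  simpa using this

lemma gMom_zero : gMom 0 = √π := by
  have := integral_gaussian 1
  simpa [gMom] using this

lemma gMom_succ (n : ℕ) : gMom (n + 1) = (n : ℝ) / 2 * gMom (n - 1) := by
  have hd : ∀ x : ℝ, HasDerivAt (fun x : ℝ => x ^ n * Real.exp (-x ^ 2))
      ((n : ℝ) * (x ^ (n - 1) * Real.exp (-x ^ 2)) - 2 * (x ^ (n + 1) * Real.exp (-x ^ 2))) x := by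
    intro x
    have h1 := hasDerivAt_pow n x
    have h2 := ((hasDerivAt_pow 2 x).neg).exp
    have h3 := h1.mul h2
    convert! h3 using 1
    simp
    ring
  have h := integral_eq_zero_of_hasDerivAt_of_integrable hd
    (((gMom_integrable _).const_mul _).sub ((gMom_integrable _).const_mul _)) (gMom_integrable n)
  rw [integral_sub ((gMom_integrable _).const_mul _) ((gMom_integrable _).const_mul _),
    integral_const_mul, integral_const_mul] at h
  unfold gMom
  linarith

lemma gMom_odd (k : ℕ) : gMom (2 * k + 1) = 0 := by
  induction k with
  | zero => rw [gMom_succ]; simp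
  | succ k ih =>
    rw [gMom_succ]
    have : 2 * (k + 1) - 1 = 2 * k + 1 := by omega
    rw [this, ih, mul_zero]

/-- Gaussian functional on polynomials. -/
noncomputable def gFun (m : ℕ) : MvPolynomial (Fin m) ℝ →ₗ[ℝ] ℝ :=
  (basisMonomials (Fin m) ℝ).constr ℝ (fun d => ∏ i, gMom (d i))

lemma gFun_monomial {m : ℕ} (d : Fin m →₀ ℕ) (c : ℝ) :
    gFun m (monomial d c) = c * ∏ i, gMom (d i) := by
  have h : monomial d c = c • (basisMonomials (Fin m) ℝ d) := by
    simp [coe_basisMonomials, smul_monomial]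
  rw [h, map_smul, gFun, Module.Basis.constr_basis, smul_eq_mul]

lemma gFun_X_mul {m : ℕ} (i : Fin m) (Q : MvPolynomial (Fin m) ℝ) :
    gFun m (X i * Q) = 1 / 2 * gFun m (pderiv i Q) := by
  induction Q using MvPolynomial.induction_on' with
  | add p q hp hq => rw [mul_add, map_add, map_add, map_add, hp, hq]; ring
  | monomial d c =>
    have hX : (X i : MvPolynomial (Fin m) ℝ) * monomial d c
        = monomial (Finsupp.single i 1 + d) c := by
      rw [X, monomial_mul, one_mul]
    rw [hX, pderiv_monomial, gFun_monomial, gFun_monomial]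
    rw [← Finset.mul_prod_erase _ _ (Finset.mem_univ i)]
    rw [← Finset.mul_prod_erase _ (fun j => gMom ((d - Finsupp.single i 1 : Fin m →₀ ℕ) j)) (Finset.mem_univ i)]
    have hr : ∏ x ∈ Finset.univ.erase i, gMom ((Finsupp.single i 1 + d : Fin m →₀ ℕ) x)
        = ∏ x ∈ Finset.univ.erase i, gMom ((d - Finsupp.single i 1 : Fin m →₀ ℕ) x) := by
      refine Finset.prod_congr rfl fun j hj => ?_
      have hj' : i ≠ j := (Finset.ne_of_mem_erase hj).symm
      simp [Finsupp.single_eq_of_ne' hj']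
    rw [hr]
    have : gMom ((Finsupp.single i 1 + d : Fin m →₀ ℕ) i) = (d i : ℝ) / 2 * gMom ((d - Finsupp.single i 1 : Fin m →₀ ℕ) i) := by
      rw [Finsupp.add_apply, Finsupp.single_eq_same, add_comm, gMom_succ]
      simp
    rw [this]
    ring

lemma gFun_lap {m n : ℕ} {P : MvPolynomial (Fin m) ℝ} (h : P.IsHomogeneous n) :
    gFun m (polyLap P) = 2 * n * gFun m P := by
  have h1 := congrArg (gFun m) h.sum_X_mul_pderiv
  rw [map_sum, map_nsmul, nsmul_eq_mul] at h1
  simp_rw [gFun_X_mul] at h1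
  rw [← Finset.mul_sum, ← map_sum] at h1
  unfold polyLap
  linarith

lemma polyLap_hom {m n : ℕ} {P : MvPolynomial (Fin m) ℝ} (h : P.IsHomogeneous (n + 2)) :
    (polyLap P).IsHomogeneous n :=
  IsHomogeneous.sum _ _ _ fun _ _ => h.pderiv.pderiv

lemma polyLap_zero_of_lt {m n : ℕ} {P : MvPolynomial (Fin m) ℝ} (h : P.IsHomogeneous n)
    (hn : n < 2) : polyLap P = 0 := by
  refine Finset.sum_eq_zero fun j _ => ?_
  have h1 : (pderiv j P).IsHomogeneous 0 := by
    have := h.pderiv (i := j)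
    rwa [show n - 1 = 0 by omega] at this
  rw [← totalDegree_zero_iff_isHomogeneous, totalDegree_eq_zero_iff_eq_C] at h1
  rw [h1, pderiv_C]

lemma polyLap_add {m : ℕ} (P Q : MvPolynomial (Fin m) ℝ) :
    polyLap (P + Q) = polyLap P + polyLap Q := by
  simp [polyLap, Finset.sum_add_distrib]

lemma polyLap_iter_add {m : ℕ} (k : ℕ) (P Q : MvPolynomial (Fin m) ℝ) :
    polyLap^[k] (P + Q) = polyLap^[k] P + polyLap^[k] Q := by
  induction k generalizing P Q with
  | zero => rfl
  | succ k ih => simp only [Function.iterate_succ_apply, polyLap_add, ih]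

lemma polyLap_iter_zero {m : ℕ} (k : ℕ) :
    polyLap^[k] (0 : MvPolynomial (Fin m) ℝ) = 0 := by
  induction k with
  | zero => rfl
  | succ k ih => rw [Function.iterate_succ_apply, show polyLap (0 : MvPolynomial (Fin m) ℝ) = 0 by
      simp [polyLap], ih]

lemma polyEval_zero {m : ℕ} (P : MvPolynomial (Fin m) ℝ) :
    polyEval 0 P = coeff 0 P := by
  rw [← constantCoeff_eq, ← eval_zero]
  rfl

lemma iter_ne {m : ℕ} (k : ℕ) : ∀ (n : ℕ) (P : MvPolynomial (Fin m) ℝ), P.IsHomogeneous n →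
    n ≠ 2 * k → coeff 0 (polyLap^[k] P) = 0 := by
  induction k with
  | zero =>
    intro n P h hn
    refine h.coeff_eq_zero ?_
    simpa using hn.symm
  | succ k ih =>
    intro n P h hn
    rw [Function.iterate_succ_apply]
    by_cases h2 : n < 2
    · rw [polyLap_zero_of_lt h h2, polyLap_iter_zero, coeff_zero]
    · obtain ⟨l, rfl⟩ : ∃ l, n = l + 2 := ⟨n - 2, by omega⟩
      exact ih l _ (polyLap_hom h) (by omega)

lemma iter_eq {m : ℕ} (k : ℕ) : ∀ (P : MvPolynomial (Fin m) ℝ), P.IsHomogeneous (2 * k) →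
    coeff 0 (polyLap^[k] P) * (√π) ^ m = 2 ^ (2 * k) * (Nat.factorial k) * gFun m P := by
  induction k with
  | zero =>
    intro P h
    rw [mul_zero, ← totalDegree_zero_iff_isHomogeneous, totalDegree_eq_zero_iff_eq_C] at h
    have : gFun m P = coeff 0 P * (√π) ^ m := by
      conv_lhs => rw [h]
      rw [← monomial_zero', gFun_monomial]
      simp [gMom_zero]
    simp [this]
  | succ k ih =>
    intro P h
    rw [Function.iterate_succ_apply, ih _ (polyLap_hom h), gFun_lap h, Nat.factorial_succ]
    push_cast
    ring

lemma gFun_odd {m : ℕ} (d : Fin m →₀ ℕ) (c : ℝ) (h : ¬ Even d.degree) :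
    gFun m (monomial d c) = 0 := by
  rw [gFun_monomial]
  have : ∃ i, ¬ Even (d i) := by
    by_contra! hc
    apply h
    rw [Finsupp.degree_eq_sum]
    exact Finset.even_sum _ fun i _ => hc i
  obtain ⟨i, hi⟩ := this
  rw [Nat.not_even_iff_odd] at hi
  obtain ⟨l, hl⟩ := hi
  rw [Finset.prod_eq_zero (Finset.mem_univ i) (by rw [hl, gMom_odd]), mul_zero]

lemma gauss_monomial {m : ℕ} (d : Fin m →₀ ℕ) (c : ℝ) :
    ∫ x : EuclideanSpace ℝ (Fin m), polyEval x (monomial d c) * Real.exp (-‖x‖ ^ 2)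
      = gFun m (monomial d c) := by
  rw [gFun_monomial]
  have h : ∀ x : EuclideanSpace ℝ (Fin m), polyEval x (monomial d c) * Real.exp (-‖x‖ ^ 2)
      = (fun y : Fin m → ℝ => c * ∏ i, (y i ^ d i * Real.exp (-(y i) ^ 2))) (WithLp.ofLp x) := by
    intro x
    simp only [polyEval, eval_monomial]
    rw [EuclideanSpace.real_norm_sq_eq, ← Finset.sum_neg_distrib, Real.exp_sum,
      Finset.prod_mul_distrib, Finsupp.prod_fintype _ _ (by simp)]
    ring
  rw [integral_congr_ae (Filter.Eventually.of_forall h)]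
  rw [(PiLp.volume_preserving_ofLp (Fin m)).integral_comp
    (MeasurableEquiv.toLp 2 (Fin m → ℝ)).symm.measurableEmbedding
    (fun y : Fin m → ℝ => c * ∏ i, (y i ^ d i * Real.exp (-(y i) ^ 2))), integral_const_mul,
    integral_fintype_prod_volume_eq_prod (f := fun i (v : ℝ) => v ^ d i * Real.exp (-v ^ 2))]
  rfl

/-- Polar coordinates for homogeneous functions. -/
lemma polar_hom {m : ℕ} (hm : 2 ≤ m) (n : ℕ) (f : EuclideanSpace ℝ (Fin m) → ℝ)
    (hf : ∀ (s : ℝ) x, f (s • x) = s ^ n * f x) (g : ℝ → ℝ) :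
    ∫ x, f x * g ‖x‖ = (∫ w, f w.1 ∂((volume : Measure (EuclideanSpace ℝ (Fin m))).toSphere)) *
      ∫ s in Set.Ioi (0 : ℝ), s ^ (n + m - 1) * g s := by
  have : Nonempty (Fin m) := ⟨⟨0, by omega⟩⟩
  have : Nontrivial (EuclideanSpace ℝ (Fin m)) := inferInstance
  set μ := (volume : Measure (EuclideanSpace ℝ (Fin m)))
  calc
    ∫ x, f x * g ‖x‖ = ∫ x : ({(0)}ᶜ : Set (EuclideanSpace ℝ (Fin m))), f x.1 * g (‖x.1‖)
        ∂(μ.comap (↑)) := by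
      rw [integral_subtype_comap (measurableSet_singleton _).compl fun x ↦ f x * g (‖x‖),
        restrict_compl_singleton]
    _ = ∫ z, f z.1.1 * (z.2.1 ^ n * g z.2.1) ∂μ.toSphere.prod
          (.volumeIoiPow (Module.finrank ℝ (EuclideanSpace ℝ (Fin m)) - 1)) := by
      rw [← μ.measurePreserving_homeomorphUnitSphereProd.integral_comp
        (Homeomorph.measurableEmbedding _)]
      congr 1
      ext x
      have hx : ‖x.1‖ ≠ 0 := norm_ne_zero_iff.2 x.2
      have : f x.1 = ‖x.1‖ ^ n * f (‖x.1‖⁻¹ • x.1) := by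
        rw [← hf, smul_inv_smul₀ hx]
      rw [this]
      simp
      ring
    _ = (∫ w, f w.1 ∂μ.toSphere) * ∫ s : Set.Ioi (0 : ℝ), s.1 ^ n * g s.1
          ∂.volumeIoiPow (Module.finrank ℝ (EuclideanSpace ℝ (Fin m)) - 1) :=
      integral_prod_mul (fun w : Metric.sphere (0 : EuclideanSpace ℝ (Fin m)) 1 => f w.1)
        (fun s : Set.Ioi (0 : ℝ) => s.1 ^ n * g s.1)
    _ = _ := by
      congr 1
      rw [finrank_euclideanSpace_fin]
      simp only [Measure.volumeIoiPow, ENNReal.ofReal]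
      rw [integral_withDensity_eq_integral_smul,
        integral_subtype_comap measurableSet_Ioi
          fun a ↦ Real.toNNReal (a ^ (m - 1)) • (a ^ n * g a),
        setIntegral_congr_fun measurableSet_Ioi fun x hx ↦ ?_]
      · rw [NNReal.smul_def, Real.coe_toNNReal _ (pow_nonneg (Set.mem_Ioi.1 hx).le _), smul_eq_mul,
          ← mul_assoc, ← pow_add]
        congr 2
        omega
      · exact (measurable_subtype_coe.pow_const _).real_toNNReal

lemma ball_hom {m : ℕ} (hm : 2 ≤ m) (n : ℕ) (f : EuclideanSpace ℝ (Fin m) → ℝ)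
    (hf : ∀ (s : ℝ) x, f (s • x) = s ^ n * f x) (r : ℝ) (hr : 0 < r) :
    ∫ x in Metric.ball (0 : EuclideanSpace ℝ (Fin m)) r, f x
      = (∫ x, f x * Real.exp (-‖x‖ ^ 2)) * r ^ (n + m) / Gamma ((m : ℝ) / 2 + 1 + n / 2) := by
  rw [polar_hom hm n f hf (fun t => Real.exp (-t ^ 2))]
  have h1 : ∫ x in Metric.ball (0 : EuclideanSpace ℝ (Fin m)) r, f x
      = ∫ x, f x * (Set.Iio r).indicator (fun _ => (1 : ℝ)) ‖x‖ := by
    rw [← integral_indicator measurableSet_ball]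
    congr 1
    ext x
    by_cases hx : ‖x‖ < r <;> simp [Set.indicator, hx]
  rw [h1, polar_hom hm n f hf]
  have hpos : 0 < n + m := by omega
  have h2 : ∫ s in Set.Ioi (0 : ℝ), s ^ (n + m - 1) * (Set.Iio r).indicator (fun _ => (1 : ℝ)) s
      = r ^ (n + m) / ((n : ℝ) + m) := by
    have : ∀ s : ℝ, s ^ (n + m - 1) * (Set.Iio r).indicator (fun _ => (1 : ℝ)) s
        = (Set.Iio r).indicator (fun s => s ^ (n + m - 1)) s := by
      intro s
      by_cases hx : s < r <;> simp [Set.indicator, hx]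
    simp_rw [this]
    rw [setIntegral_indicator measurableSet_Iio, Set.Ioi_inter_Iio, ← integral_Ioc_eq_integral_Ioo,
      ← intervalIntegral.integral_of_le hr.le, integral_pow, Nat.sub_add_cancel hpos,
      Nat.cast_pred hpos, zero_pow hpos.ne']
    push_cast
    ring
  have h3 : ∫ s in Set.Ioi (0 : ℝ), s ^ (n + m - 1) * Real.exp (-s ^ 2)
      = 1 / 2 * Gamma (((n : ℝ) + m) / 2) := by
    have := integral_rpow_mul_exp_neg_rpow (p := 2) (q := ((n + m - 1 : ℕ) : ℝ)) two_pos
      (by have : (0 : ℝ) ≤ ((n + m - 1 : ℕ) : ℝ) := Nat.cast_nonneg _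
          linarith)
    rw [Nat.cast_pred hpos, sub_add_cancel, ← Nat.cast_pred hpos] at this
    simp_rw [rpow_natCast, rpow_two] at this
    rw [this]
    push_cast
    rfl
  have hm' : (0 : ℝ) < (n : ℝ) + m := by exact_mod_cast hpos
  have h4 : Gamma ((m : ℝ) / 2 + 1 + n / 2) = ((n : ℝ) + m) / 2 * Gamma (((n : ℝ) + m) / 2) := by
    rw [← Gamma_add_one (by positivity)]
    congr 1
    ring
  have h5 : Gamma (((n : ℝ) + m) / 2) ≠ 0 := (Gamma_pos_of_pos (by positivity)).ne'
  rw [h2, h3, h4]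
  field_simp

lemma polyEval_continuous {m : ℕ} (P : MvPolynomial (Fin m) ℝ) :
    Continuous (fun x : EuclideanSpace ℝ (Fin m) => polyEval x P) := by
  unfold polyEval
  exact (MvPolynomial.continuous_eval P).comp (by fun_prop)

lemma polyEval_integrableOn {m : ℕ} (P : MvPolynomial (Fin m) ℝ) (r : ℝ) :
    IntegrableOn (fun x : EuclideanSpace ℝ (Fin m) => polyEval x P) (Metric.ball 0 r) :=
  ((polyEval_continuous P).continuousOn.integrableOn_compact
    (isCompact_closedBall 0 r)).mono_set Metric.ball_subset_closedBall

lemma polyEval_monomial_smul {m : ℕ} (d : Fin m →₀ ℕ) (c s : ℝ) (x : EuclideanSpace ℝ (Fin m)) :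
    polyEval (s • x) (monomial d c) = s ^ d.degree * polyEval x (monomial d c) := by
  simp only [polyEval, eval_monomial]
  rw [Finsupp.prod_fintype _ _ (by simp), Finsupp.prod_fintype _ _ (by simp)]
  simp only [PiLp.smul_apply, smul_eq_mul, mul_pow, Finset.prod_mul_distrib]
  rw [Finset.prod_pow_eq_pow_sum, Finsupp.degree_eq_sum]
  ring

lemma pizzetti_hasSum (m : ℕ) (hm : 2 ≤ m) (R : MvPolynomial (Fin m) ℝ) (r : ℝ) (hr : 0 < r) :
    HasSum (fun k : ℕ => (π ^ ((m : ℝ) / 2) /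
          (2 ^ (2 * k) * (Nat.factorial k) * Gamma ((m : ℝ) / 2 + 1 + k)))
          * polyEval 0 (polyLap^[k] R) * r ^ (2 * k + m))
      (∫ x in Metric.ball (0 : EuclideanSpace ℝ (Fin m)) r, polyEval x R) := by
  induction R using MvPolynomial.induction_on' with
  | add p q hp hq =>
    have := hp.add hq
    rw [← integral_add (polyEval_integrableOn p r) (polyEval_integrableOn q r)] at this
    convert! this using 1
    · ext k
      rw [polyLap_iter_add, polyEval_zero, polyEval_zero, polyEval_zero, coeff_add]
      ring
    · simp [polyEval]
  | monomial d c =>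
    have hh : (monomial d c).IsHomogeneous d.degree := isHomogeneous_monomial c rfl
    rw [ball_hom hm d.degree _ (polyEval_monomial_smul d c) r hr, gauss_monomial]
    simp_rw [polyEval_zero]
    by_cases he : Even d.degree
    · obtain ⟨l, hl⟩ := he
      have hl' : d.degree = 2 * l := by omega
      rw [hl'] at hh ⊢
      have hS := iter_eq l _ hh
      have hpi : π ^ ((m : ℝ) / 2) = (√π) ^ m := by
        rw [Real.sqrt_eq_rpow, ← rpow_natCast, ← rpow_mul pi_pos.le]
        congr 1
        ring
      have hs := hasSum_single (f := fun k : ℕ => (π ^ ((m : ℝ) / 2) /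
          (2 ^ (2 * k) * (Nat.factorial k) * Gamma ((m : ℝ) / 2 + 1 + k)))
          * coeff 0 (polyLap^[k] (monomial d c)) * r ^ (2 * k + m)) l (by
        intro k hk
        simp only [iter_ne k _ _ hh (by omega)]
        ring)
      convert! hs using 1
      have hG : Gamma ((m : ℝ) / 2 + 1 + l) ≠ 0 := (Gamma_pos_of_pos (by positivity)).ne'
      have hl2 : ((2 * l : ℕ) : ℝ) / 2 = l := by push_cast; ring
      have hf : (Nat.factorial l : ℝ) ≠ 0 := by positivity
      rw [hpi, hl2]
      field_simp
      linear_combination (-1 : ℝ) * hS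
    · rw [gFun_odd d c he]
      convert! hasSum_zero using 1
      · ext k
        rw [iter_ne k _ _ hh (by rintro h; exact he (h ▸ even_two_mul k))]
        ring
      · simp

/-- Pizzetti's formula on the ball `B(0,r)` of `ℝ^m`. -/
theorem pizzetti_ball (m : ℕ) (hm : 2 ≤ m) (R : MvPolynomial (Fin m) ℝ) (r : ℝ) (hr : 0 < r) :
    ∫ x in Metric.ball (0 : EuclideanSpace ℝ (Fin m)) r, polyEval x R
      = ∑' k : ℕ, (π ^ ((m : ℝ) / 2) /
          (2 ^ (2 * k) * (Nat.factorial k) * Gamma ((m : ℝ) / 2 + 1 + k)))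
          * polyEval 0 (polyLap^[k] R) * r ^ (2 * k + m) := by
  exact (pizzetti_hasSum m hm R r hr).tsum_eq.symm
end

section
/- Let m ≥ 2 and s ≥ 0 be integers, and let R_{2s} : ℝ^m → ℝ be a polynomial function that is homogeneous of degree 2s. Then for every unit vector ω ∈ S^{m-1}, (Δ^s R_{2s})(0) = (2^{2s} · s! / √π) · Σ_{k=0}^{s} (Γ(s − k + 1/2) / (2^{2k} · k!)) · ((Δ − ⟨ω,∂_x⟩²)^k R_{2s})(ω). (Note that Δ^s R_{2s} is a constant polynomial.) -/
open MeasureTheory Real MvPolynomial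
open scoped RealInnerProductSpace

/-- The directional derivative `⟨ω, ∂_x⟩` acting on (multivariate) polynomials. -/
noncomputable def polyDir {m : ℕ} (ω : EuclideanSpace ℝ (Fin m))
    (P : MvPolynomial (Fin m) ℝ) : MvPolynomial (Fin m) ℝ :=
  ∑ j, ω j • pderiv j P

lemma aux_pderiv_comm {m : ℕ} (i j : Fin m) (P : MvPolynomial (Fin m) ℝ) :
    pderiv i (pderiv j P) = pderiv j (pderiv i P) := by
  ext d
  simp only [coeff_pderiv]
  by_cases h : i = j
  · subst h; rfl
  · have h' : ¬ j = i := fun e => h e.symm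
    rw [add_right_comm]
    simp [Finsupp.single_apply, h, h']
    ring

/-- Partial derivative as an endomorphism. -/
noncomputable def auxP {m : ℕ} (i : Fin m) : Module.End ℝ (MvPolynomial (Fin m) ℝ) :=
  (pderiv i).toLinearMap

/-- Laplacian as an endomorphism. -/
noncomputable def auxL (m : ℕ) : Module.End ℝ (MvPolynomial (Fin m) ℝ) :=
  ∑ j, auxP j * auxP j

/-- Directional derivative as an endomorphism. -/
noncomputable def auxD {m : ℕ} (ω : EuclideanSpace ℝ (Fin m)) :
    Module.End ℝ (MvPolynomial (Fin m) ℝ) :=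
  ∑ j, ω j • auxP j

lemma auxP_comm {m : ℕ} (i j : Fin m) : Commute (auxP i) (auxP j) := by
  refine LinearMap.ext fun P => ?_
  exact aux_pderiv_comm i j P

lemma auxL_apply {m : ℕ} (P : MvPolynomial (Fin m) ℝ) : auxL m P = polyLap P := by
  simp [auxL, polyLap, auxP]

lemma auxD_apply {m : ℕ} (ω : EuclideanSpace ℝ (Fin m)) (P : MvPolynomial (Fin m) ℝ) :
    auxD ω P = polyDir ω P := by
  simp [auxD, polyDir, auxP]

lemma aux_comm {m : ℕ} (ω : EuclideanSpace ℝ (Fin m)) : Commute (auxL m) (auxD ω) := by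
  refine Commute.sum_left _ _ _ fun i _ => Commute.sum_right _ _ _ fun j _ => ?_
  exact ((auxP_comm i j).mul_left (auxP_comm i j)).smul_right _

lemma auxD_hom {m n : ℕ} (ω : EuclideanSpace ℝ (Fin m)) {P : MvPolynomial (Fin m) ℝ}
    (h : P.IsHomogeneous n) : (auxD ω P).IsHomogeneous (n - 1) := by
  rw [auxD_apply]
  refine IsHomogeneous.sum _ _ _ fun i _ => ?_
  exact (homogeneousSubmodule (Fin m) ℝ (n - 1)).smul_mem _ h.pderiv

lemma auxL_hom {m n : ℕ} {P : MvPolynomial (Fin m) ℝ}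
    (h : P.IsHomogeneous n) : (auxL m P).IsHomogeneous (n - 2) := by
  rw [auxL_apply]
  exact IsHomogeneous.sum _ _ _ fun i _ => h.pderiv.pderiv

lemma auxD_euler {m n : ℕ} (ω : EuclideanSpace ℝ (Fin m)) {P : MvPolynomial (Fin m) ℝ}
    (h : P.IsHomogeneous n) : polyEval ω (auxD ω P) = n * polyEval ω P := by
  have := congrArg (polyEval ω) h.sum_X_mul_pderiv
  simp [polyEval] at this
  rw [auxD_apply]
  simpa [polyEval, polyDir, smul_eval] using this

lemma auxD_pow {m n : ℕ} (ω : EuclideanSpace ℝ (Fin m)) {P : MvPolynomial (Fin m) ℝ}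
    (h : P.IsHomogeneous n) :
    polyEval 0 ((auxD ω ^ n) P) = n.factorial * polyEval ω P := by
  induction n generalizing P with
  | zero =>
    have := (totalDegree_eq_zero_iff_eq_C).1 ((totalDegree_zero_iff_isHomogeneous _).2 h)
    rw [this]
    simp [polyEval]
  | succ n ih =>
    rw [pow_succ, Module.End.mul_apply, ih (by simpa using auxD_hom ω h), auxD_euler ω h,
      Nat.factorial_succ]
    push_cast
    ring

lemma aux_hom_pow {m n : ℕ} (ω : EuclideanSpace ℝ (Fin m)) {P : MvPolynomial (Fin m) ℝ}
    (h : P.IsHomogeneous n) (k : ℕ) :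
    (((auxL m - auxD ω ^ 2) ^ k) P).IsHomogeneous (n - 2 * k) := by
  induction k with
  | zero => simpa using h
  | succ k ih =>
    rw [pow_succ', Module.End.mul_apply, LinearMap.sub_apply, pow_two, Module.End.mul_apply]
    have e : n - 2 * (k + 1) = n - 2 * k - 2 := by omega
    rw [e]
    exact (auxL_hom ih).sub (auxD_hom ω (auxD_hom ω ih))

lemma aux_iter {m : ℕ} (ω : EuclideanSpace ℝ (Fin m)) (P : MvPolynomial (Fin m) ℝ) (k : ℕ) :
    (fun Q => polyLap Q - polyDir ω (polyDir ω Q))^[k] P = ((auxL m - auxD ω ^ 2) ^ k) P := by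
  rw [Module.End.pow_apply]
  congr 2
  funext Q
  simp [pow_two, auxL_apply, auxD_apply]

lemma aux_coeff {m : ℕ} (R : MvPolynomial (Fin m) ℝ) (t : ℝ) (d : Fin m →₀ ℕ) :
    coeff d (aeval (fun i => C t * X i) R : MvPolynomial (Fin m) ℝ) = t ^ d.degree * coeff d R := by
  classical
  induction R using MvPolynomial.induction_on' with
  | monomial u a =>
    have : (aeval (fun i => C t * X i) (monomial u a) : MvPolynomial (Fin m) ℝ)
        = monomial u (t ^ u.degree * a) := by
      rw [aeval_monomial]
      simp only [Finsupp.prod, mul_pow, Finset.prod_mul_distrib, Finset.prod_pow_eq_pow_sum]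
      rw [← map_pow, monomial_eq, C_mul, Finsupp.prod, Finsupp.degree_apply]
      simp only [MvPolynomial.algebraMap_eq]
      ring
    rw [this, coeff_monomial, coeff_monomial]
    split_ifs with h
    · rw [h]
    · simp
  | add p q hp hq => rw [map_add, coeff_add, coeff_add, hp, hq, mul_add]

lemma aux_isHom {m n : ℕ} (R : MvPolynomial (Fin m) ℝ)
    (hhom : ∀ (t : ℝ) (x : EuclideanSpace ℝ (Fin m)),
      polyEval (t • x) R = t ^ n * polyEval x R) : R.IsHomogeneous n := by
  have key : (aeval (fun i => C (2 : ℝ) * X i) R : MvPolynomial (Fin m) ℝ) = C (2 ^ n) * R := by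
    apply MvPolynomial.funext
    intro x
    have := hhom 2 (WithLp.toLp 2 x)
    simp only [polyEval, PiLp.smul_apply, smul_eq_mul] at this
    rw [eval_mul, eval_C, ← this, show (aeval (fun i => C (2 : ℝ) * X i) R : MvPolynomial (Fin m) ℝ) = bind₁ (fun i => C (2 : ℝ) * X i) R from rfl]
    unfold eval
    rw [eval₂Hom_bind₁]
    congr 2
    funext i
    simp
  intro d hd
  have h := congrArg (coeff d) key
  rw [aux_coeff, coeff_C_mul] at h
  have h2 := mul_right_cancel₀ hd h
  have := pow_right_injective₀ (by norm_num : (0 : ℝ) < 2) (by norm_num) h2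
  rw [← this, Finsupp.degree_eq_weight_one]
  rfl

lemma aux_gamma (n : ℕ) : Gamma ((n : ℝ) + 1 / 2) * (2 ^ (2 * n) * n.factorial)
    = (2 * n).factorial * √π := by
  induction n with
  | zero => simp [Real.Gamma_one_half_eq, ← one_div]
  | succ n ih =>
    have e : ((n + 1 : ℕ) : ℝ) + 1 / 2 = ((n : ℝ) + 1 / 2) + 1 := by push_cast; ring
    rw [e, Real.Gamma_add_one (by positivity), mul_add 2 n 1, Nat.factorial_succ,
      show 2 * n + 2 * 1 = (2 * n + 1) + 1 by ring, Nat.factorial_succ, Nat.factorial_succ]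
    push_cast
    linear_combination (2 * n + 1) * (2 * n + 2 : ℝ) * ih

/-- The identity relating `Δ^s R_{2s}(0)` to the action of `(Δ - ⟨ω,∂⟩²)^k` at a unit
vector `ω`, for a homogeneous polynomial of degree `2s`. -/
theorem lap_pow_at_zero_eq (m s : ℕ) (hm : 2 ≤ m) (R : MvPolynomial (Fin m) ℝ)
    (hhom : ∀ (t : ℝ) (x : EuclideanSpace ℝ (Fin m)),
      polyEval (t • x) R = t ^ (2 * s) * polyEval x R)
    (ω : EuclideanSpace ℝ (Fin m)) (hω : ‖ω‖ = 1) :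
    polyEval 0 (polyLap^[s] R)
      = (2 ^ (2 * s) * (Nat.factorial s) / Real.sqrt π) *
          ∑ k ∈ Finset.range (s + 1),
            (Gamma ((s : ℝ) - k + 1 / 2) / (2 ^ (2 * k) * (Nat.factorial k)))
            * polyEval ω ((fun Q => polyLap Q - polyDir ω (polyDir ω Q))^[k] R) := by
  have hR := aux_isHom R hhom
  have hcomm : Commute (auxL m - auxD ω ^ 2) (auxD ω ^ 2) :=
    ((aux_comm ω).pow_right 2).sub_left (Commute.refl _)
  have e1 : polyLap^[s] R = (auxL m ^ s) R := by
    rw [Module.End.pow_apply]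
    congr 2
    funext Q
    exact (auxL_apply Q).symm
  have e2 : auxL m ^ s = ∑ k ∈ Finset.range (s + 1),
      (s.choose k) • ((auxD ω ^ (2 * (s - k))) * (auxL m - auxD ω ^ 2) ^ k) := by
    have := hcomm.add_pow s
    rw [sub_add_cancel] at this
    rw [this]
    refine Finset.sum_congr rfl fun k _ => ?_
    rw [pow_mul, ((hcomm.pow_left k).pow_right (s - k)).eq, nsmul_eq_mul, Nat.cast_comm]
  have e3 : polyEval 0 (polyLap^[s] R) = ∑ k ∈ Finset.range (s + 1),
      (s.choose k : ℝ) * ((2 * (s - k)).factorial *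
        polyEval ω (((auxL m - auxD ω ^ 2) ^ k) R)) := by
    rw [e1, e2, LinearMap.sum_apply]
    unfold polyEval
    rw [map_sum]
    refine Finset.sum_congr rfl fun k _ => ?_
    have h := aux_hom_pow ω hR k
    rw [← Nat.mul_sub] at h
    have := auxD_pow ω h
    unfold polyEval at this
    rw [← this]
    simp
  rw [e3, Finset.mul_sum]
  refine Finset.sum_congr rfl fun k hk => ?_
  rw [aux_iter]
  obtain ⟨n, rfl⟩ := Nat.exists_eq_add_of_le (Nat.lt_succ_iff.1 (Finset.mem_range.1 hk))
  have g := aux_gamma n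
  have hc : ((k + n).choose k : ℝ) * k.factorial * n.factorial = (k + n).factorial := by
    have := Nat.add_choose_mul_factorial_mul_factorial k n
    rw [← Nat.choose_symm_add] at this
    exact_mod_cast this
  have hp : √π ≠ 0 := by positivity
  have hk0 : (k.factorial : ℝ) ≠ 0 := by positivity
  have hn0 : (n.factorial : ℝ) ≠ 0 := by positivity
  rw [Nat.add_sub_cancel_left, ← mul_assoc, ← mul_assoc]
  congr 1
  have e4 : ((k + n : ℕ) : ℝ) - k + 1 / 2 = n + 1 / 2 := by push_cast; ring
  rw [e4, ← hc, mul_add 2 k n, pow_add]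
  have g2 : ((2 * n).factorial : ℝ) = Gamma ((n : ℝ) + 1 / 2) * (2 ^ (2 * n) * n.factorial) / √π := by
    rw [g]; field_simp
  rw [g2]
  field_simp
end

section
/- Let m ≥ 2 be an even integer and k ≥ 0 an integer. Then ∏_{j=1}^{(m−2)/2} [−2k(m−2+2k) − (m−2j−1)(2j−1)] = (−1)^{m/2 − 1} · 2^{m−2} · Γ((m−1)/2 + k)² / Γ(k + 1/2)². (For m = 2 the product is empty and equals 1.) -/
open Real

theorem helgason_aux (k n : ℕ) :
    (∏ i ∈ Finset.range n, (2 * (k : ℝ) + 2 * i + 1)) * Gamma ((k : ℝ) + 1 / 2)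
      = 2 ^ n * Gamma ((k : ℝ) + 1 / 2 + n) := by
  induction n with
  | zero => simp
  | succ n ih =>
    have h : Gamma ((k : ℝ) + 1 / 2 + n + 1) = ((k : ℝ) + 1 / 2 + n) * Gamma ((k : ℝ) + 1 / 2 + n) :=
      Real.Gamma_add_one (by positivity)
    rw [Finset.prod_range_succ, Nat.cast_succ, ← add_assoc, h, mul_right_comm, ih]
    ring

/-- Evaluation of the Helgason polynomial `P_{m-2}` at the Laplace–Beltrami eigenvalue
`-2k(m-2+2k)` of spherical harmonics of degree `2k`, in closed form. -/
theorem helgason_polynomial_eval (m k : ℕ) (hm : 2 ≤ m) (hmeven : Even m) :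
    (∏ j ∈ Finset.Icc 1 ((m - 2) / 2),
        (-2 * (k : ℝ) * ((m : ℝ) - 2 + 2 * k) - ((m : ℝ) - 2 * j - 1) * (2 * (j : ℝ) - 1)))
      = (-1 : ℝ) ^ (m / 2 - 1) * 2 ^ (m - 2) *
          Gamma (((m : ℝ) - 1) / 2 + k) ^ 2 / Gamma ((k : ℝ) + 1 / 2) ^ 2 := by
  obtain ⟨n, rfl⟩ : ∃ n, m = 2 * n + 2 := by
    obtain ⟨r, hr⟩ := hmeven
    exact ⟨r - 1, by omega⟩
  have e1 : (2 * n + 2 - 2) / 2 = n := by omega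
  have e2 : (2 * n + 2) / 2 - 1 = n := by omega
  have e3 : 2 * n + 2 - 2 = n * 2 := by omega
  have e4 : (((2 * n + 2 : ℕ) : ℝ) - 1) / 2 + k = (k : ℝ) + 1 / 2 + n := by push_cast; ring
  rw [e1, e2, e3, e4]
  have hG : Gamma ((k : ℝ) + 1 / 2) ≠ 0 := (Real.Gamma_pos_of_pos (by positivity)).ne'
  have hp : (∏ j ∈ Finset.Icc 1 n, (-2 * (k : ℝ) * (((2 * n + 2 : ℕ) : ℝ) - 2 + 2 * k)
        - (((2 * n + 2 : ℕ) : ℝ) - 2 * j - 1) * (2 * (j : ℝ) - 1)))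
      = (-1) ^ n * (∏ i ∈ Finset.range n, (2 * (k : ℝ) + 2 * i + 1)) ^ 2 := by
    have hr := Finset.prod_range_reflect (fun i : ℕ => 2 * (k : ℝ) + 2 * i + 1) n
    rw [sq]
    nth_rewrite 2 [← hr]
    rw [← Finset.prod_mul_distrib, ← Finset.card_range n, ← Finset.prod_const, Finset.card_range,
      ← Finset.prod_mul_distrib, Finset.range_eq_Ico,
      ← Finset.Ico_add_one_right_eq_Icc, ← Finset.prod_Ico_add' _ 0 n 1]
    refine Finset.prod_congr rfl fun i hi => ?_
    have hi' : i < n := (Finset.mem_Ico.mp hi).2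
    have : ((n - 1 - i : ℕ) : ℝ) = n - 1 - i := by
      rw [Nat.cast_sub (by omega), Nat.cast_sub (by omega), Nat.cast_one]
    rw [this]
    push_cast
    ring
  rw [hp, eq_div_iff (pow_ne_zero 2 hG), mul_assoc, ← mul_pow, helgason_aux, mul_pow, pow_mul,
    mul_assoc]
end

section
/- Let m ≥ 3 be an integer and let k ≥ j ≥ 0 be integers. For u > 0 define J(u) = ∫_0^{√u} (1 − q²)^{k−j} · q^{2j+m−2} · (u − q²)^{(m−4)/2} dq. Then the (m−2)-nd derivative of J at u = 1 satisfies J^{(m−2)}(1) = (Γ((m−2)/2) / 2) · (Γ(j + (m−1)/2) / Γ(k + 1/2)) · ∏_{i=0}^{k−j−1} ((2−m)/2 + i), where the product is empty (equal to 1) when j = k. -/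
open Real

lemma aux_pascal (f : ℕ → ℝ) (n : ℕ) :
    ∑ i ∈ Finset.range (n + 2), (-1 : ℝ) ^ i * ((n + 1).choose i : ℝ) * f i
      = ∑ i ∈ Finset.range (n + 1), (-1 : ℝ) ^ i * (n.choose i : ℝ) * f i
        - ∑ i ∈ Finset.range (n + 1), (-1 : ℝ) ^ i * (n.choose i : ℝ) * f (i + 1) := by
  have h : ∑ i ∈ Finset.range (n + 1), (-1 : ℝ) ^ i * (n.choose i : ℝ) * f i
      = ∑ i ∈ Finset.range (n + 2), (-1 : ℝ) ^ i * (n.choose i : ℝ) * f i := by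
    rw [Finset.sum_range_succ _ (n + 1)]
    simp
  rw [h, Finset.sum_range_succ', Finset.sum_range_succ' _ (n + 1)]
  simp only [Nat.choose_succ_succ, Nat.choose_zero_right]
  rw [add_sub_right_comm, ← Finset.sum_sub_distrib]
  congr 1
  apply Finset.sum_congr rfl
  intro i _
  push_cast
  ring

lemma aux_vdm (n : ℕ) : ∀ b d : ℝ, 0 < b → 0 < d →
    ∑ i ∈ Finset.range (n + 1), (-1 : ℝ) ^ i * (n.choose i : ℝ) * (Gamma (b + i) / Gamma (d + i))
      = (∏ i ∈ Finset.range n, (d - b + i)) * Gamma b / Gamma (d + n) := by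
  induction n with
  | zero => intro b d _ _; simp
  | succ n ih =>
    intro b d hb hd
    rw [aux_pascal (fun i => Gamma (b + i) / Gamma (d + i)), ih b d hb hd]
    have h2 := ih (b + 1) (d + 1) (by linarith) (by linarith)
    have h3 : ∑ i ∈ Finset.range (n + 1), (-1 : ℝ) ^ i * (n.choose i : ℝ) *
        (Gamma (b + (i + 1 : ℕ)) / Gamma (d + (i + 1 : ℕ)))
        = ∑ i ∈ Finset.range (n + 1), (-1 : ℝ) ^ i * (n.choose i : ℝ) *
        (Gamma (b + 1 + i) / Gamma (d + 1 + i)) := by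
      apply Finset.sum_congr rfl
      intro i _
      rw [show b + ((i + 1 : ℕ) : ℝ) = b + 1 + i by push_cast; ring,
        show d + ((i + 1 : ℕ) : ℝ) = d + 1 + i by push_cast; ring]
    rw [h3, h2, Finset.prod_range_succ]
    have hdn : 0 < d + n := by positivity
    rw [show d + 1 - (b + 1) = d - b by ring, show d + 1 + (n : ℝ) = (d + n) + 1 by ring,
      show d + ((n + 1 : ℕ) : ℝ) = (d + n) + 1 by push_cast; ring,
      Gamma_add_one hb.ne', Gamma_add_one hdn.ne']
    have := (Gamma_pos_of_pos hdn).ne'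
    field_simp
    ring

lemma aux_beta (s t u : ℝ) (hs : 0 < s) (ht : 0 < t) (hu : 0 < u) :
    ∫ x in (0 : ℝ)..u, x ^ (s - 1) * (u - x) ^ (t - 1)
      = u ^ (s + t - 1) * (Gamma s * Gamma t / Gamma (s + t)) := by
  have h := Complex.betaIntegral_scaled s t hu
  rw [Complex.betaIntegral_eq_Gamma_mul_div _ _ (by simpa) (by simpa)] at h
  have h2 : ∫ x in (0 : ℝ)..u, (x : ℂ) ^ ((s : ℂ) - 1) * ((u : ℂ) - x) ^ ((t : ℂ) - 1)
      = ∫ x in (0 : ℝ)..u, ((x ^ (s - 1) * (u - x) ^ (t - 1) : ℝ) : ℂ) := by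
    apply intervalIntegral.integral_congr
    intro x hx
    rw [Set.uIcc_of_le hu.le] at hx
    simp only []
    rw [Complex.ofReal_mul, Complex.ofReal_cpow hx.1, Complex.ofReal_cpow (by linarith [hx.2])]
    push_cast
    rfl
  rw [h2, intervalIntegral.integral_ofReal] at h
  apply Complex.ofReal_injective
  rw [h, Complex.ofReal_mul, Complex.ofReal_cpow hu.le, Complex.ofReal_div, Complex.ofReal_mul,
    ← Complex.Gamma_ofReal, ← Complex.Gamma_ofReal, ← Complex.Gamma_ofReal]
  push_cast
  rfl

lemma aux_int (N : ℕ) (c u : ℝ) (hc : 0 < c) (hu : 0 < u) :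
    ∫ q in (0 : ℝ)..√u, q ^ N * (u - q ^ 2) ^ (c - 1)
      = u ^ (((N : ℝ) + 1) / 2 + c - 1) *
        (Gamma (((N : ℝ) + 1) / 2) * Gamma c / Gamma (((N : ℝ) + 1) / 2 + c)) / 2 := by
  have hN : 0 < ((N : ℝ) + 1) / 2 := by positivity
  rw [← aux_beta _ c u hN hc hu, intervalIntegral.integral_of_le hu.le,
    intervalIntegral.integral_of_le (Real.sqrt_nonneg u),
    MeasureTheory.integral_Ioc_eq_integral_Ioo, MeasureTheory.integral_Ioc_eq_integral_Ioo]
  have him : (fun q : ℝ => q ^ 2) '' Set.Ioo 0 (√u) = Set.Ioo 0 u := by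
    ext x
    constructor
    · rintro ⟨q, ⟨h1, h2⟩, rfl⟩
      refine ⟨by positivity, ?_⟩
      have := Real.sq_sqrt hu.le
      simp only []
      nlinarith
    · rintro ⟨h1, h2⟩
      exact ⟨√x, ⟨Real.sqrt_pos.2 h1, Real.sqrt_lt_sqrt h1.le h2⟩, Real.sq_sqrt h1.le⟩
  have hinj : Set.InjOn (fun q : ℝ => q ^ 2) (Set.Ioo 0 (√u)) := by
    intro a ha b hb hab
    exact (pow_left_inj₀ ha.1.le hb.1.le two_ne_zero).1 hab
  have key := MeasureTheory.integral_image_eq_integral_abs_deriv_smul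
    (f := fun q : ℝ => q ^ 2) (f' := fun q => 2 * q) (s := Set.Ioo 0 (√u)) measurableSet_Ioo
    (fun x _ => by simpa using (hasDerivAt_pow 2 x).hasDerivWithinAt) hinj
    (fun x => x ^ (((N : ℝ) + 1) / 2 - 1) * (u - x) ^ (c - 1))
  rw [him] at key
  rw [key, eq_div_iff two_ne_zero, ← MeasureTheory.integral_mul_const]
  apply MeasureTheory.setIntegral_congr_fun measurableSet_Ioo
  intro q hq
  have hq0 : 0 < q := hq.1
  simp only [smul_eq_mul]
  rw [abs_of_pos (by positivity), ← Real.rpow_natCast q 2, ← Real.rpow_mul hq0.le,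
    show ((2 : ℕ) : ℝ) * (((N : ℝ) + 1) / 2 - 1) = (N : ℝ) - 1 by push_cast; ring,
    Real.rpow_sub_one hq0.ne']
  simp only [Real.rpow_natCast]
  field_simp

lemma aux_integrable (N : ℕ) (c u : ℝ) (hc : 0 < c) (hu : 0 < u) :
    IntervalIntegrable (fun q : ℝ => q ^ N * (u - q ^ 2) ^ (c - 1)) MeasureTheory.volume 0 (√u) := by
  have hs : 0 < √u := Real.sqrt_pos.2 hu
  have h1 : IntervalIntegrable (fun q : ℝ => q ^ (c - 1)) MeasureTheory.volume 0 (√u) :=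
    intervalIntegral.intervalIntegrable_rpow' (by linarith)
  have h2 := (h1.comp_sub_left (√u)).symm
  simp only [sub_self, sub_zero] at h2
  have h3 : ContinuousOn (fun q : ℝ => q ^ N * (√u + q) ^ (c - 1)) (Set.uIcc 0 (√u)) := by
    rw [Set.uIcc_of_le hs.le]
    apply ContinuousOn.mul (by fun_prop)
    apply ContinuousOn.rpow_const (by fun_prop)
    intro x hx
    left
    have := hx.1
    positivity
  refine (h2.mul_continuousOn h3).congr ?_
  intro q hq
  rw [Set.uIoc_of_le hs.le] at hq
  simp only []
  have hq0 := hq.1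
  rw [show u - q ^ 2 = (√u - q) * (√u + q) by nlinarith [Real.sq_sqrt hu.le],
    Real.mul_rpow (by linarith [hq.2]) (by positivity)]
  ring

lemma aux_deriv (n : ℕ) (a p : ℕ → ℝ) (M : ℕ) (hp : ∀ i, (M : ℝ) < p i + 1) (f : ℝ → ℝ)
    (hf : ∀ u, 0 < u → f u = ∑ i ∈ Finset.range n, a i * u ^ (p i)) :
    ∀ u, 0 < u → deriv^[M] f u = ∑ i ∈ Finset.range n,
      a i * (Gamma (p i + 1) / Gamma (p i + 1 - M)) * u ^ (p i - M) := by
  induction M with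
  | zero =>
    intro u hu
    rw [Function.iterate_zero, id, hf u hu]
    apply Finset.sum_congr rfl
    intro i _
    have hh := hp i
    have := (Gamma_pos_of_pos (s := p i + 1) (by simpa using hh)).ne'
    simp [this]
  | succ M ih =>
    intro u hu
    have ih' := ih (fun i => by have := hp i; push_cast at this; linarith)
    rw [Function.iterate_succ_apply']
    have he : deriv^[M] f =ᶠ[nhds u] fun u => ∑ i ∈ Finset.range n,
      a i * (Gamma (p i + 1) / Gamma (p i + 1 - M)) * u ^ (p i - M) := by
      filter_upwards [lt_mem_nhds hu] with v hv using ih' v hv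
    rw [he.deriv_eq]
    have hd : HasDerivAt (fun u : ℝ => ∑ i ∈ Finset.range n,
        a i * (Gamma (p i + 1) / Gamma (p i + 1 - M)) * u ^ (p i - M))
        (∑ i ∈ Finset.range n, a i * (Gamma (p i + 1) / Gamma (p i + 1 - M)) *
          ((p i - M) * u ^ (p i - M - 1))) u := by
      apply HasDerivAt.fun_sum
      intro i _
      exact (Real.hasDerivAt_rpow_const (Or.inl hu.ne')).const_mul _
    rw [hd.deriv]
    apply Finset.sum_congr rfl
    intro i _
    have h0 : 0 < p i - M := by have := hp i; push_cast at this; linarith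
    push_cast
    rw [show p i + 1 - (M : ℝ) = (p i - M) + 1 by ring, Gamma_add_one h0.ne',
      show p i + 1 - ((M : ℝ) + 1) = p i - M by ring,
      show p i - ((M : ℝ) + 1) = p i - M - 1 by ring]
    have := (Gamma_pos_of_pos h0).ne'
    field_simp



/-- The `(m-2)`-nd derivative at `u = 1` of
`J(u) = ∫_0^{√u} (1-q²)^{k-j} q^{2j+m-2} (u-q²)^{(m-4)/2} dq`, in closed form. -/
theorem deriv_J_eval (m k j : ℕ) (hm : 3 ≤ m) (hjk : j ≤ k) :
    deriv^[m - 2]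
        (fun u : ℝ => ∫ q in (0 : ℝ)..Real.sqrt u,
          (1 - q ^ 2) ^ (k - j) * q ^ (2 * j + m - 2) * (u - q ^ 2) ^ (((m : ℝ) - 4) / 2)) 1
      = (Gamma (((m : ℝ) - 2) / 2) / 2) *
          (Gamma ((j : ℝ) + ((m : ℝ) - 1) / 2) / Gamma ((k : ℝ) + 1 / 2)) *
          ∏ i ∈ Finset.range (k - j), ((2 - (m : ℝ)) / 2 + i) := by

  obtain ⟨M, rfl⟩ : ∃ M, m = M + 2 := ⟨m - 2, by omega⟩
  obtain ⟨n, rfl⟩ : ∃ n, k = j + n := ⟨k - j, by omega⟩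
  have hM : (1 : ℝ) ≤ M := by exact_mod_cast (by omega : 1 ≤ M)
  rw [show M + 2 - 2 = M by omega, show j + n - j = n by omega,
    show 2 * j + (M + 2) - 2 = 2 * j + M by omega]
  push_cast
  have hc : 0 < (M : ℝ) / 2 := by positivity
  rw [show ((M : ℝ) + 2 - 4) / 2 = M / 2 - 1 by ring, show ((M : ℝ) + 2 - 2) / 2 = M / 2 by ring,
    show ((M : ℝ) + 2 - 1) / 2 = M / 2 + 1 / 2 by ring,
    show (2 - ((M : ℝ) + 2)) / 2 = - (M / 2) by ring]
  have hJ : ∀ u : ℝ, 0 < u → (∫ q in (0 : ℝ)..√u,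
      (1 - q ^ 2) ^ n * q ^ (2 * j + M) * (u - q ^ 2) ^ ((M : ℝ) / 2 - 1))
      = ∑ i ∈ Finset.range (n + 1), ((-1 : ℝ) ^ i * (n.choose i : ℝ) *
        (Gamma (j + (M / 2 + 1 / 2) + i) * Gamma (M / 2) / Gamma (j + i + M + 1 / 2) / 2)) *
        u ^ ((j : ℝ) + i + M - 1 / 2) := by
    intro u hu
    have h1 : ∀ q : ℝ, (1 - q ^ 2) ^ n * q ^ (2 * j + M) * (u - q ^ 2) ^ ((M : ℝ) / 2 - 1)
        = ∑ i ∈ Finset.range (n + 1), ((-1 : ℝ) ^ i * (n.choose i : ℝ)) *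
          (q ^ (2 * (j + i) + M) * (u - q ^ 2) ^ ((M : ℝ) / 2 - 1)) := by
      intro q
      rw [show (1 - q ^ 2) = (-(q ^ 2) + 1) by ring, add_pow, Finset.sum_mul, Finset.sum_mul]
      apply Finset.sum_congr rfl
      intro i _
      rw [neg_pow]
      ring
    simp_rw [h1]
    rw [intervalIntegral.integral_finsetSum
      (fun i _ => (aux_integrable _ _ u hc hu).const_mul _)]
    apply Finset.sum_congr rfl
    intro i _
    rw [intervalIntegral.integral_const_mul, aux_int _ _ u hc hu]
    push_cast
    rw [show (2 * ((j : ℝ) + i) + M + 1) / 2 + M / 2 - 1 = (j : ℝ) + i + M - 1 / 2 by ring,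
      show (2 * ((j : ℝ) + i) + M + 1) / 2 + M / 2 = (j : ℝ) + i + M + 1 / 2 by ring,
      show (2 * ((j : ℝ) + i) + M + 1) / 2 = (j : ℝ) + (M / 2 + 1 / 2) + i by ring]
    ring
  rw [aux_deriv (n + 1) _ (fun i => (j : ℝ) + i + M - 1 / 2) M
    (fun i => by have : (0 : ℝ) ≤ (j : ℝ) + i := by positivity
                 linarith) _ hJ 1 one_pos]
  have hv := aux_vdm n (j + (M / 2 + 1 / 2)) (j + 1 / 2) (by positivity) (by positivity)
  rw [show (j : ℝ) + 1 / 2 - (j + (M / 2 + 1 / 2)) = -(M / 2) by ring,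
    show (j : ℝ) + 1 / 2 + n = j + n + 1 / 2 by ring] at hv
  trans (Gamma (M / 2) / 2) * ((∏ i ∈ Finset.range n, (-((M : ℝ) / 2) + i)) *
    Gamma (j + (M / 2 + 1 / 2)) / Gamma (j + n + 1 / 2))
  · rw [← hv, Finset.mul_sum]
    apply Finset.sum_congr rfl
    intro i _
    rw [Real.one_rpow, show (j : ℝ) + i + M - 1 / 2 + 1 = j + i + M + 1 / 2 by ring,
      show (j : ℝ) + i + M + 1 / 2 - M = j + 1 / 2 + i by ring]
    have := (Gamma_pos_of_pos (s := (j : ℝ) + i + M + 1 / 2) (by positivity)).ne'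
    field_simp
  · ring
end

section
/- Let k ≥ 0 be an integer and let a ∈ ℝ be such that a + 1/2 is not an integer and a is not a nonpositive integer. Then Σ_{j=0}^{k} ((−1)^j / (2^{2j} · j! · (2k−2j)!)) · Γ(k − j + 1/2 − a) = (−1)^k · (Γ(k + a) · Γ(1/2 − a)) / ((2k)! · Γ(a)). -/
open Real

/-- Rising factorial as a product. -/
noncomputable def risingP (x : ℝ) (n : ℕ) : ℝ := ∏ i ∈ Finset.range n, (x + i)

lemma risingP_succ (x : ℝ) (n : ℕ) : risingP x (n + 1) = risingP x n * (x + n) := by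
  simp [risingP, Finset.prod_range_succ]

lemma risingP_zero (x : ℝ) : risingP x 0 = 1 := by
  simp [risingP]

lemma risingP_succ_left (x : ℝ) (n : ℕ) : risingP x (n + 1) = x * risingP (x + 1) n := by
  unfold risingP
  rw [Finset.prod_range_succ', mul_comm]
  congr 1
  · simp
  · refine Finset.prod_congr rfl fun i _ => ?_
    push_cast
    ring

lemma risingP_add (x : ℝ) (m n : ℕ) :
    risingP x (m + n) = risingP x m * risingP (x + m) n := by
  induction n with
  | zero => simp [risingP_zero]
  | succ n ih =>
    rw [← add_assoc, risingP_succ, risingP_succ, ih]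
    push_cast
    ring

lemma risingP_half (n : ℕ) :
    ((Nat.factorial (2 * n) : ℕ) : ℝ) = 2 ^ (2 * n) * (Nat.factorial n) * risingP (1 / 2) n := by
  induction n with
  | zero => simp [risingP_zero]
  | succ n ih =>
    rw [show 2 * (n + 1) = 2 * n + 1 + 1 by ring, Nat.factorial_succ, Nat.factorial_succ,
      Nat.factorial_succ, risingP_succ]
    push_cast
    rw [ih]
    ring

lemma risingP_half_pos (n : ℕ) : 0 < risingP (1 / 2) n :=
  Finset.prod_pos fun i _ => by positivity

lemma Gamma_risingP (x : ℝ) (hx : ∀ n : ℕ, x + n ≠ 0) (n : ℕ) :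
    Gamma (x + n) = risingP x n * Gamma x := by
  induction n with
  | zero => simp [risingP_zero]
  | succ n ih =>
    have h := Real.Gamma_add_one (hx n)
    rw [risingP_succ]
    push_cast
    rw [← add_assoc, h, ih]
    ring

lemma risingP_vandermonde (k : ℕ) : ∀ b c : ℝ,
    ∑ ij ∈ Finset.HasAntidiagonal.antidiagonal k, ((k.choose ij.1 : ℕ) : ℝ) *
      ((-1) ^ ij.1 * risingP b ij.1 * risingP (c + ij.1) ij.2) = risingP (c - b) k := by
  induction k with
  | zero => intro b c; simp [risingP_zero]
  | succ k ih =>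
    intro b c
    have h := Finset.sum_antidiagonal_choose_succ_mul
      (fun i j => (-1 : ℝ) ^ i * risingP b i * risingP (c + i) j) k
    rw [h, risingP_succ]
    have e1 := ih b c
    have e2 := ih (b + 1) (c + 1)
    rw [show c + 1 - (b + 1) = c - b by ring] at e2
    have h1 : risingP (c - b) k * (c - b + k) =
        (c + k) * risingP (c - b) k + (-b) * risingP (c - b) k := by ring
    rw [h1]
    congr 1
    · rw [← e1, Finset.mul_sum]
      refine Finset.sum_congr rfl fun ij hij => ?_
      rw [Finset.HasAntidiagonal.mem_antidiagonal] at hij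
      rw [risingP_succ, ← hij]
      push_cast
      ring
    · rw [← e2, Finset.mul_sum]
      refine Finset.sum_congr rfl fun ij hij => ?_
      rw [Finset.HasAntidiagonal.mem_antidiagonal] at hij
      rw [risingP_succ_left, ← hij, Nat.choose_symm_add]
      push_cast
      rw [show c + ((ij.1 : ℝ) + 1) = c + 1 + ij.1 by ring]
      ring

/-- The Gamma–binomial summation identity used in the proof of the inversion formula for
the spherical Radon transform. -/
theorem gamma_binomial_sum (k : ℕ) (a : ℝ) (ha1 : ∀ n : ℤ, a + 1 / 2 ≠ n)
    (ha2 : ∀ n : ℕ, a ≠ -(n : ℝ)) :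
    ∑ j ∈ Finset.range (k + 1),
        ((-1 : ℝ) ^ j / (2 ^ (2 * j) * (Nat.factorial j) * (Nat.factorial (2 * k - 2 * j))))
          * Gamma ((k : ℝ) - j + 1 / 2 - a)
      = (-1 : ℝ) ^ k * (Gamma ((k : ℝ) + a) * Gamma (1 / 2 - a)) /
          ((Nat.factorial (2 * k)) * Gamma a) := by
  have hG : Gamma a ≠ 0 := Real.Gamma_ne_zero ha2
  have hb : ∀ n : ℕ, (1 / 2 - a) + n ≠ 0 := by
    intro n hn
    apply ha1 (n + 1)
    push_cast
    linarith
  have ha : ∀ n : ℕ, a + n ≠ 0 := fun n hn => ha2 n (by linarith)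
  have hV := risingP_vandermonde k (1 / 2 - a) (1 / 2)
  rw [show (1 / 2 : ℝ) - (1 / 2 - a) = a by ring] at hV
  have hR : (-1 : ℝ) ^ k * (Gamma ((k : ℝ) + a) * Gamma (1 / 2 - a)) /
      ((Nat.factorial (2 * k)) * Gamma a) =
      ((-1 : ℝ) ^ k * Gamma (1 / 2 - a) / (Nat.factorial (2 * k))) * risingP a k := by
    rw [add_comm (k : ℝ) a, Gamma_risingP a ha]
    field_simp
  rw [hR, ← hV, Finset.mul_sum, ← Finset.sum_range_reflect,
    Finset.Nat.sum_antidiagonal_eq_sum_range_succ_mk]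
  refine Finset.sum_congr rfl fun m hm => ?_
  obtain ⟨j, rfl⟩ := Nat.exists_eq_add_of_le (Nat.lt_succ_iff.mp (Finset.mem_range.mp hm))
  rw [show m + j + 1 - 1 - m = j by omega, show 2 * (m + j) - 2 * j = 2 * m by omega]
  simp only [Nat.add_sub_cancel_left]
  rw [show ((m + j : ℕ) : ℝ) - j + 1 / 2 - a = (1 / 2 - a) + m by push_cast; ring,
    Gamma_risingP _ hb, risingP_half m, risingP_half (m + j), risingP_add (1 / 2) m j]
  have hc : (((m + j).choose m : ℕ) : ℝ) * (m.factorial) * (j.factorial) =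
      ((m + j).factorial : ℝ) := by
    rw [Nat.choose_symm_add]
    exact_mod_cast Nat.add_choose_mul_factorial_mul_factorial m j
  have p1 := (risingP_half_pos m).ne'
  have p2 : risingP (1 / 2 + m) j ≠ 0 := by
    have := (risingP_half_pos (m + j)).ne'
    rw [risingP_add] at this
    exact right_ne_zero_of_mul this
  have f1 : (m.factorial : ℝ) ≠ 0 := by positivity
  have f2 : (j.factorial : ℝ) ≠ 0 := by positivity
  have f3 : (((m + j).choose m : ℕ) : ℝ) ≠ 0 := by
    exact_mod_cast (Nat.choose_pos (Nat.le_add_right m j)).ne'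
  rw [← hc]
  have s : (-1 : ℝ) ^ m * (-1) ^ m = 1 := by
    rw [← mul_pow]; simp
  generalize risingP (1 / 2 + m) j = X at *
  generalize risingP (1 / 2) m = Y at *
  generalize risingP (1 / 2 - a) m = Z at *
  generalize Gamma (1 / 2 - a) = W at *
  generalize (((m + j).choose m : ℕ) : ℝ) = C at *
  rw [show 2 * (m + j) = 2 * m + 2 * j by ring, pow_add, pow_add]
  have t1 : (2 : ℝ) ^ (2 * m) ≠ 0 := by positivity
  have t2 : (2 : ℝ) ^ (2 * j) ≠ 0 := by positivity
  generalize (2 : ℝ) ^ (2 * m) = T at *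
  generalize (2 : ℝ) ^ (2 * j) = U at *
  generalize (-1 : ℝ) ^ m = M at *
  generalize (-1 : ℝ) ^ j = J at *
  field_simp
  linear_combination (-(J * Z * W)) * s
end
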